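/- There is an absolute constant C such that for every α ∈ (0, 1/1000] and every three times continuously differentiable f with compact support contained in (0,∞)×(0,π/2): ‖f‖_{L^∞} ≤ C α^{−1/2} ‖f‖_{H²} and ‖f‖_{C¹} ≤ C α^{−1/2} ‖f‖_{H³}. -/

import Mathlib

open Real MeasureTheory Set

noncomputable section

namespace Paper

/-- The domain `(0,∞) × (0,π/2)` in the `(R,β)` variables. -/
def Qdom : Set (ℝ × ℝ) := Set.Ioi (0:ℝ) ×ˢ Set.Ioo (0:ℝ) (Real.pi/2)

/-- Inner product `⟨f,g⟩ = ∫₀^∞ ∫₀^{π/2} f g dβ dR`. -/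
def inner2 (f g : ℝ → ℝ → ℝ) : ℝ :=
  ∫ R in Set.Ioi (0:ℝ), ∫ β in Set.Ioo (0:ℝ) (Real.pi/2), f R β * g R β

/-- The `L²` norm `‖f‖₂`. -/
def norm2 (f : ℝ → ℝ → ℝ) : ℝ := Real.sqrt (inner2 f f)

/-- `‖h‖_{L²(R)}` for functions of `R` alone. -/
def normR (h : ℝ → ℝ) : ℝ := Real.sqrt (∫ R in Set.Ioi (0:ℝ), (h R)^2)

/-- `D_R = R ∂_R`. -/
def DR (f : ℝ → ℝ → ℝ) : ℝ → ℝ → ℝ := fun R β => R * deriv (fun r => f r β) R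

/-- `D_R` for functions of `R` alone. -/
def DR1 (h : ℝ → ℝ) : ℝ → ℝ := fun R => R * deriv h R

/-- `D_β = sin(2β) ∂_β`. -/
def Dbeta (f : ℝ → ℝ → ℝ) : ℝ → ℝ → ℝ :=
  fun R β => Real.sin (2*β) * deriv (fun b => f R b) β

/-- `L₁₂(Ω)(R) = ∫_R^∞ ∫₀^{π/2} Ω(s,β) sin(2β) s⁻¹ dβ ds`. -/
def L12 (Ω : ℝ → ℝ → ℝ) (R : ℝ) : ℝ :=
  ∫ s in Set.Ioi R, ∫ β in Set.Ioo (0:ℝ) (Real.pi/2), Ω s β * Real.sin (2*β) / s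

/-- `L̃₁₂(Ω)(R) = L₁₂(Ω)(R) − L₁₂(Ω)(0)`. -/
def tL12 (Ω : ℝ → ℝ → ℝ) (R : ℝ) : ℝ := L12 Ω R - L12 Ω 0

/-- Compact support contained in the open domain `(0,∞)×(0,π/2)`. -/
def suppIn (f : ℝ → ℝ → ℝ) : Prop :=
  ∃ K : Set (ℝ × ℝ), IsCompact K ∧ K ⊆ Qdom ∧ ∀ x y : ℝ, (x, y) ∉ K → f x y = 0

/-- Integrability over the domain. -/
def Integrable2 (f : ℝ → ℝ → ℝ) : Prop :=
  MeasureTheory.IntegrableOn (Function.uncurry f) Qdom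

/-- `Γ(β) = (cos β)^α`. -/
def Γf (α : ℝ) (β : ℝ) : ℝ := Real.cos β ^ α

/-- The normalizing constant `c = (2/π)∫₀^{π/2} Γ(β) sin(2β) dβ`. -/
def cst (α : ℝ) : ℝ :=
  (2/Real.pi) * ∫ β in Set.Ioo (0:ℝ) (Real.pi/2), Γf α β * Real.sin (2*β)

/-- The approximate profile `Ω̄`. -/
def Ωbar (α : ℝ) : ℝ → ℝ → ℝ := fun R β => (α / cst α) * Γf α β * (3*R/(1+R)^2)

/-- The approximate profile `η̄`. -/
def ηbar (α : ℝ) : ℝ → ℝ → ℝ := fun R β => (α / cst α) * Γf α β * (6*R/(1+R)^3)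

/-- The singular weight `φ₁ = (1+R)⁴R⁻⁴ sin(2β)^{-σ}`, `σ = 99/100`. -/
def phi1 : ℝ → ℝ → ℝ := fun R β => (1+R)^4 / R^4 * Real.sin (2*β) ^ (-(99/100 : ℝ))

/-- The singular weight `φ₂ = (1+R)⁴R⁻⁴ sin(2β)^{-γ}`, `γ = 1 + α/10`. -/
def phi2 (α : ℝ) : ℝ → ℝ → ℝ := fun R β => (1+R)^4 / R^4 * Real.sin (2*β) ^ (-(1 + α/10))

/-- The singular weight `ψ₁ = (1+R)⁴R⁻⁴ (sin β cos β)^{-σ}`. -/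
def psi1 : ℝ → ℝ → ℝ := fun R β =>
  (1+R)^4 / R^4 * (Real.sin β * Real.cos β) ^ (-(99/100 : ℝ))

/-- The singular weight `ψ₂ = (1+R)⁴R⁻⁴ (sin β)^{-σ}(cos β)^{-γ}`. -/
def psi2 (α : ℝ) : ℝ → ℝ → ℝ := fun R β =>
  (1+R)^4 / R^4 * Real.sin β ^ (-(99/100 : ℝ)) * Real.cos β ^ (-(1 + α/10))

/-- `c_ω = −(2/(πα)) L₁₂(Ω)(0)`. -/
def cω (α : ℝ) (Ω : ℝ → ℝ → ℝ) : ℝ := -(2/(Real.pi*α)) * L12 Ω 0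

/-- The linearized operator `L₁`. -/
def opL1 (α : ℝ) (Ω η : ℝ → ℝ → ℝ) : ℝ → ℝ → ℝ := fun R β =>
  - DR Ω R β - (3/(1+R)) * Dbeta Ω R β - Ω R β + η R β
  + cω α Ω * (Ωbar α R β - DR (Ωbar α) R β)

/-- The linearized operator `L₂`. -/
def opL2 (α : ℝ) (Ω η : ℝ → ℝ → ℝ) : ℝ → ℝ → ℝ := fun R β =>
  - DR η R β - (3/(1+R)) * Dbeta η R β + (-2 + 3/(1+R)) * η R β
  + (2/(Real.pi*α)) * tL12 Ω R * ηbar α R β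
  + cω α Ω * (ηbar α R β - DR (ηbar α) R β)

/-- `ξ̄` in Cartesian variables. -/
def ξbarC (α : ℝ) (x y : ℝ) : ℝ :=
  -(18*α^2 / cst α) * ∫ z in Set.Ioo (0:ℝ) x,
      (y/(y^2+z^2)) * (z ^ α * (z^2+y^2) ^ (α/2) / (1 + (z^2+y^2) ^ (α/2))^4)

/-- `ξ̄` in the `(R,β)` variables, via `x = R^{1/α} cos β`, `y = R^{1/α} sin β`. -/
def ξbar (α : ℝ) : ℝ → ℝ → ℝ := fun R β =>
  ξbarC α (R ^ (1/α) * Real.cos β) (R ^ (1/α) * Real.sin β)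

/-- The linearized operator `L₃`. -/
def opL3 (α : ℝ) (Ω ξ : ℝ → ℝ → ℝ) : ℝ → ℝ → ℝ := fun R β =>
  - DR ξ R β - (3/(1+R)) * Dbeta ξ R β + (-2 - 3/(1+R)) * ξ R β
  - (2/(Real.pi*α)) * tL12 Ω R * ξbar α R β
  + cω α Ω * (3 * ξbar α R β - DR (ξbar α) R β)

/-- Weighted Sobolev norm `H^m` with radial weight `w1` and angular weight `w2`:
`‖f‖ = Σ_{0≤k≤m} ‖(D_R^k f)√w1‖₂ + Σ_{i+j≤m−1} ‖(D_R^i D_β^{j+1} f)√w2‖₂`. -/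
def Hnorm (m : ℕ) (w1 w2 : ℝ → ℝ → ℝ) (f : ℝ → ℝ → ℝ) : ℝ :=
  (∑ k ∈ Finset.range (m+1),
    norm2 (fun R β => DR^[k] f R β * Real.sqrt (w1 R β)))
  + ∑ p ∈ (Finset.range (m+1) ×ˢ Finset.range (m+1)).filter
      (fun p => p.1 + p.2 + 1 ≤ m),
      norm2 (fun R β => DR^[p.1] (Dbeta^[p.2+1] f) R β * Real.sqrt (w2 R β))

/-- Sup of `|f|` over the domain `(0,∞)×(0,π/2)`. -/
def supDom (f : ℝ → ℝ → ℝ) : ℝ :=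
  ⨆ (R : Set.Ioi (0:ℝ)) (β : Set.Ioo (0:ℝ) (Real.pi/2)), |f R.1 β.1|

/-- The weighted `C¹` norm. -/
def C1norm (α : ℝ) (f : ℝ → ℝ → ℝ) : ℝ :=
  supDom f + supDom (fun R β => (1+R)/R * DR f R β)
  + supDom (fun R β =>
      (1 + (R * Real.sin (2*β) ^ α) ^ (-(1/40 : ℝ))) * Dbeta f R β)

/-- Boundedness of `f` on the domain. -/
def BddDom (f : ℝ → ℝ → ℝ) : Prop :=
  ∃ M : ℝ, ∀ R ∈ Set.Ioi (0:ℝ), ∀ β ∈ Set.Ioo (0:ℝ) (Real.pi/2), |f R β| ≤ M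

/-- Finiteness of the weighted `C¹` norm. -/
def C1Fin (α : ℝ) (f : ℝ → ℝ → ℝ) : Prop :=
  BddDom f ∧ BddDom (fun R β => (1+R)/R * DR f R β) ∧
  BddDom (fun R β => (1 + (R * Real.sin (2*β) ^ α) ^ (-(1/40 : ℝ))) * Dbeta f R β)

/-- The weighted `W^{l,∞}` norm. -/
def Wnorm (α : ℝ) (l : ℕ) (f : ℝ → ℝ → ℝ) : ℝ :=
  (∑ k ∈ Finset.range (l+1), supDom (DR^[k] f))
  + ∑ p ∈ (Finset.range (l+1) ×ˢ Finset.range (l+1)).filter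
      (fun p => p.1 + p.2 ≤ l ∧ 1 ≤ p.2),
      supDom (fun R β => Real.sin (2*β) ^ (-(α/5)) *
        DR^[p.1] (fun R' β' => Dbeta^[p.2] f R' β' / (α/10 + Real.sin (2*β'))) R β)

/-- Finiteness of the `W^{l,∞}` norm. -/
def WFin (α : ℝ) (l : ℕ) (f : ℝ → ℝ → ℝ) : Prop :=
  (∀ k ≤ l, BddDom (DR^[k] f)) ∧
  ∀ k j : ℕ, k + j ≤ l → 1 ≤ j →
    BddDom (fun R β => Real.sin (2*β) ^ (-(α/5)) *
      DR^[k] (fun R' β' => Dbeta^[j] f R' β' / (α/10 + Real.sin (2*β'))) R β)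

/-- `I(f)(x,y) = ∫₀ˣ f(z,y)/z dz`. -/
def Ifun (f : ℝ → ℝ → ℝ) : ℝ → ℝ → ℝ := fun x y => ∫ z in Set.Ioo (0:ℝ) x, f z y / z

/-- `D_S g = (1/α)(z ∂_z g + y ∂_y g)` in Cartesian variables. -/
def DScart (α : ℝ) (g : ℝ → ℝ → ℝ) : ℝ → ℝ → ℝ := fun a b =>
  (1/α) * (a * deriv (fun a' => g a' b) a + b * deriv (fun b' => g a b') b)

/-- `D_τ g = 2y ∂_y g − 2α (y²/(y²+z²)) D_S g` in Cartesian variables. -/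
def DTcart (α : ℝ) (g : ℝ → ℝ → ℝ) : ℝ → ℝ → ℝ := fun a b =>
  2*b * deriv (fun b' => g a b') b - 2*α*(b^2/(b^2+a^2)) * DScart α g a b

/-!
If `v` has compact support in the domain, integrating `∂_R ∂_β v` gives
`‖v‖_∞ ≤ ∫∫ |∂_R ∂_β v|`. For `v = R^{-a} sin(2β)^{-b} u` the operators `D_R`, `D_β` pass through
the weight as `D_R - a` and `D_β - 2b cos(2β)`, so the integrand is a combination of
`D_R^i D_β^j u`, `i, j ≤ 1`, times a weight. Cauchy–Schwarz against `φ₂^{1/2}` leaves the dual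
weight, whose square is at most `(1+R)^{-2} sin(2β)^{δ-1}` with `δ` comparable to `α`, because
`γ = 1 + α/10 > 1`. Its integral is of order `1/α`, whence the factor `α^{-1/2}`. The three terms of
the `C¹` norm correspond to `u = f`, `u = D_R f` with `a ∈ {0, 1}`, and `u = D_β f` with
`(a, b) ∈ {(0, 0), (1/40, α/40)}`.
-/

open scoped Topology

/-! ### Partial derivatives of compactly supported functions -/

section PartialDerivatives

variable {f : ℝ → ℝ → ℝ}

lemma hasDerivAt_fst_slice {g : ℝ × ℝ → ℝ} {x y : ℝ} (hg : DifferentiableAt ℝ g (x, y)) :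
    HasDerivAt (fun r => g (r, y)) (fderiv ℝ g (x, y) (1, 0)) x :=
  hg.hasFDerivAt.comp_hasDerivAt x ((hasDerivAt_id x).prodMk (hasDerivAt_const x y))

lemma hasDerivAt_snd_slice {g : ℝ × ℝ → ℝ} {x y : ℝ} (hg : DifferentiableAt ℝ g (x, y)) :
    HasDerivAt (fun b => g (x, b)) (fderiv ℝ g (x, y) (0, 1)) y :=
  hg.hasFDerivAt.comp_hasDerivAt y ((hasDerivAt_const y x).prodMk (hasDerivAt_id y))

lemma differentiableAt_fst_slice (hf : Differentiable ℝ (Function.uncurry f)) (x y : ℝ) :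
    DifferentiableAt ℝ (fun r => f r y) x :=
  (hasDerivAt_fst_slice (hf (x, y))).differentiableAt

lemma differentiableAt_snd_slice (hf : Differentiable ℝ (Function.uncurry f)) (x y : ℝ) :
    DifferentiableAt ℝ (f x) y :=
  (hasDerivAt_snd_slice (hf (x, y))).differentiableAt

lemma uncurry_deriv_fst_eq (hf : Differentiable ℝ (Function.uncurry f)) :
    Function.uncurry (fun x y => deriv (fun r => f r y) x)
      = fun p => fderiv ℝ (Function.uncurry f) p (1, 0) :=
  funext fun p => (hasDerivAt_fst_slice (hf p)).deriv

lemma uncurry_deriv_snd_eq (hf : Differentiable ℝ (Function.uncurry f)) :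
    Function.uncurry (fun x y => deriv (f x) y)
      = fun p => fderiv ℝ (Function.uncurry f) p (0, 1) :=
  funext fun p => (hasDerivAt_snd_slice (hf p)).deriv

lemma contDiff_deriv_fst {n : ℕ} (hf : ContDiff ℝ (n + 1) (Function.uncurry f)) :
    ContDiff ℝ n (Function.uncurry fun x y => deriv (fun r => f r y) x) := by
  rw [uncurry_deriv_fst_eq (hf.differentiable (by simp))]
  exact (hf.fderiv_right le_rfl).clm_apply contDiff_const

lemma contDiff_deriv_snd {n : ℕ} (hf : ContDiff ℝ (n + 1) (Function.uncurry f)) :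
    ContDiff ℝ n (Function.uncurry fun x y => deriv (f x) y) := by
  rw [uncurry_deriv_snd_eq (hf.differentiable (by simp))]
  exact (hf.fderiv_right le_rfl).clm_apply contDiff_const

lemma deriv_fst_deriv_snd_comm (hf : ContDiff ℝ 2 (Function.uncurry f)) (x y : ℝ) :
    deriv (fun r => deriv (f r) y) x = deriv (fun b => deriv (fun r => f r b) x) y := by
  have hdiff : Differentiable ℝ (Function.uncurry f) := hf.differentiable (by simp)
  have hdiff' : Differentiable ℝ (fderiv ℝ (Function.uncurry f)) :=
    (hf.fderiv_right (m := 1) (by norm_num)).differentiable (by simp)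
  have hpartial (v : ℝ × ℝ) :
      DifferentiableAt ℝ (fun p => fderiv ℝ (Function.uncurry f) p v) (x, y) :=
    (hdiff' _).clm_apply (differentiableAt_const v)
  have hsnd : deriv (fun r => deriv (f r) y) x
      = fderiv ℝ (fderiv ℝ (Function.uncurry f)) (x, y) (1, 0) (0, 1) := by
    rw [show (fun r => deriv (f r) y) = _ from
      funext fun r => congrFun (uncurry_deriv_snd_eq hdiff) (r, y),
      (hasDerivAt_fst_slice (hpartial _)).deriv, fderiv_clm_apply (hdiff' _) (by fun_prop)]
    simp
  have hfst : deriv (fun b => deriv (fun r => f r b) x) y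
      = fderiv ℝ (fderiv ℝ (Function.uncurry f)) (x, y) (0, 1) (1, 0) := by
    rw [show (fun b => deriv (fun r => f r b) x) = _ from
      funext fun b => congrFun (uncurry_deriv_fst_eq hdiff) (x, b),
      (hasDerivAt_snd_slice (hpartial _)).deriv, fderiv_clm_apply (hdiff' _) (by fun_prop)]
    simp
  rw [hsnd, hfst, (hf.contDiffAt.isSymmSndFDerivAt (by simp)).eq]

lemma support_deriv_fst_subset (f : ℝ → ℝ → ℝ) :
    Function.support (Function.uncurry fun x y => deriv (fun r => f r y) x)
      ⊆ tsupport (Function.uncurry f) := by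
  rintro ⟨x, y⟩
  contrapose
  intro hxy
  have hzero : (fun r => f r y) =ᶠ[𝓝 x] fun _ => 0 :=
    ((Continuous.prodMk_left y).tendsto x).eventually (notMem_tsupport_iff_eventuallyEq.mp hxy)
  simpa using hzero.deriv_eq

lemma support_deriv_snd_subset (f : ℝ → ℝ → ℝ) :
    Function.support (Function.uncurry fun x y => deriv (f x) y)
      ⊆ tsupport (Function.uncurry f) := by
  rintro ⟨x, y⟩
  contrapose
  intro hxy
  have hzero : f x =ᶠ[𝓝 y] fun _ => 0 :=
    ((Continuous.prodMk_right x).tendsto y).eventually (notMem_tsupport_iff_eventuallyEq.mp hxy)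
  simpa using hzero.deriv_eq

lemma hasCompactSupport_fst_slice (hf : HasCompactSupport (Function.uncurry f)) (y : ℝ) :
    HasCompactSupport fun r => f r y :=
  hf.comp_isClosedEmbedding (g := fun r => (r, y)) <|
    Function.LeftInverse.isClosedEmbedding (f := Prod.fst) (fun _ => rfl)
      continuous_fst (Continuous.prodMk_left y)

lemma hasCompactSupport_snd_slice (hf : HasCompactSupport (Function.uncurry f)) (x : ℝ) :
    HasCompactSupport (f x) :=
  hf.comp_isClosedEmbedding (g := fun b => (x, b)) <|
    Function.LeftInverse.isClosedEmbedding (f := Prod.snd) (fun _ => rfl)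
      continuous_snd (Continuous.prodMk_right x)

theorem enorm_le_lintegral_mixed_deriv (hf : ContDiff ℝ 2 (Function.uncurry f))
    (hsupp : HasCompactSupport (Function.uncurry f)) (x y : ℝ) :
    ‖f x y‖ₑ ≤ ∫⁻ p : ℝ × ℝ, ‖deriv (fun r => deriv (f r) p.2) p.1‖ₑ := by
  have hsnd : ContDiff ℝ 1 (Function.uncurry fun r b => deriv (f r) b) := contDiff_deriv_snd hf
  have hmixed : Continuous fun p : ℝ × ℝ => deriv (fun r => deriv (f r) p.2) p.1 :=
    (contDiff_deriv_fst (n := 0) (by simpa using hsnd)).continuous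
  have hsupp_snd : HasCompactSupport (Function.uncurry fun r b => deriv (f r) b) :=
    hsupp.mono' (support_deriv_snd_subset f)
  calc ‖f x y‖ₑ ≤ ∫⁻ b, ‖deriv (f x) b‖ₑ :=
        (HasCompactSupport.enorm_le_lintegral_Ici_deriv
          ((hf.of_le one_le_two).comp (contDiff_prodMk_right x))
          (hasCompactSupport_snd_slice hsupp x) y).trans
          (setLIntegral_le_lintegral _ _)
    _ ≤ ∫⁻ b, ∫⁻ r, ‖deriv (fun r => deriv (f r) b) r‖ₑ := by
        gcongr with b
        exact (HasCompactSupport.enorm_le_lintegral_Ici_deriv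
          (hsnd.comp (contDiff_prodMk_left b))
          (hasCompactSupport_fst_slice hsupp_snd b) x).trans
          (setLIntegral_le_lintegral _ _)
    _ = ∫⁻ p : ℝ × ℝ, ‖deriv (fun r => deriv (f r) p.2) p.1‖ₑ :=
        (lintegral_prod_symm' _ hmixed.enorm.measurable).symm

end PartialDerivatives

/-! ### Functions with compact support in the domain -/

section CompactSupport

variable {f g : ℝ → ℝ → ℝ}

lemma isOpen_Qdom : IsOpen Qdom := isOpen_Ioi.prod isOpen_Ioo

lemma measurableSet_Qdom : MeasurableSet Qdom := isOpen_Qdom.measurableSet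

lemma sin_two_mul_pos {β : ℝ} (hβ : β ∈ Ioo 0 (π / 2)) : 0 < sin (2 * β) :=
  sin_pos_of_pos_of_lt_pi (by linarith [hβ.1]) (by linarith [hβ.2])

lemma suppIn_iff :
    suppIn f ↔ HasCompactSupport (Function.uncurry f) ∧ tsupport (Function.uncurry f) ⊆ Qdom := by
  refine ⟨fun ⟨K, hK, hKQ, hfK⟩ => ?_, fun ⟨hf, hfQ⟩ =>
    ⟨_, hf, hfQ, fun x y hxy =>
      image_eq_zero_of_notMem_tsupport (f := Function.uncurry f) hxy⟩⟩
  exact ⟨.intro hK fun p hp => hfK p.1 p.2 hp, (closure_minimal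
    (Function.support_subset_iff'.mpr fun p hp => hfK p.1 p.2 hp) hK.isClosed).trans hKQ⟩

lemma eq_zero_of_notMem_Qdom (hf : suppIn f) {R β : ℝ} (h : (R, β) ∉ Qdom) : f R β = 0 :=
  image_eq_zero_of_notMem_tsupport (f := Function.uncurry f) fun hp => h ((suppIn_iff.mp hf).2 hp)

lemma suppIn_of_support_subset (hf : suppIn f)
    (h : Function.support (Function.uncurry g) ⊆ tsupport (Function.uncurry f)) : suppIn g := by
  obtain ⟨hfc, hfQ⟩ := suppIn_iff.mp hf
  exact suppIn_iff.mpr ⟨hfc.mono' h, (closure_minimal h (isClosed_tsupport _)).trans hfQ⟩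

lemma suppIn_mul_left (hf : suppIn f) (w : ℝ → ℝ → ℝ) : suppIn fun R β => w R β * f R β :=
  suppIn_of_support_subset hf <|
    (Function.support_mul_subset_right (Function.uncurry w) (Function.uncurry f)).trans
      subset_closure

lemma suppIn_sub (hf : suppIn f) (hg : suppIn g) : suppIn fun R β => f R β - g R β := by
  obtain ⟨K, hK, hKQ, hfK⟩ := hf
  obtain ⟨L, hL, hLQ, hgL⟩ := hg
  refine ⟨K ∪ L, hK.union hL, union_subset hKQ hLQ, fun x y hxy => ?_⟩
  rw [mem_union, not_or] at hxy
  simp only [hfK x y hxy.1, hgL x y hxy.2, sub_zero]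

lemma suppIn_DR (hf : suppIn f) : suppIn (DR f) :=
  suppIn_mul_left (suppIn_of_support_subset hf (support_deriv_fst_subset f)) fun R _ => R

lemma suppIn_Dbeta (hf : suppIn f) : suppIn (Dbeta f) :=
  suppIn_mul_left (suppIn_of_support_subset hf (support_deriv_snd_subset f))
    fun _ β => sin (2 * β)

lemma contDiff_DR {n : ℕ} (hf : ContDiff ℝ (n + 1) (Function.uncurry f)) :
    ContDiff ℝ n (Function.uncurry (DR f)) :=
  contDiff_fst.mul (contDiff_deriv_fst hf)

lemma contDiff_Dbeta {n : ℕ} (hf : ContDiff ℝ (n + 1) (Function.uncurry f)) :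
    ContDiff ℝ n (Function.uncurry (Dbeta f)) :=
  (contDiff_sin.comp (contDiff_const.mul contDiff_snd)).mul (contDiff_deriv_snd hf)

lemma DR_Dbeta_apply (f : ℝ → ℝ → ℝ) (R β : ℝ) :
    DR (Dbeta f) R β = R * sin (2 * β) * deriv (fun r => deriv (f r) β) R := by
  simp only [DR, Dbeta, deriv_const_mul_field, mul_assoc]

lemma Dbeta_DR_comm (hf : ContDiff ℝ 2 (Function.uncurry f)) : Dbeta (DR f) = DR (Dbeta f) := by
  ext R β
  rw [DR_Dbeta_apply, deriv_fst_deriv_snd_comm hf]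
  simp only [DR, Dbeta, deriv_const_mul_field]
  ring

lemma contDiff_mul_of_suppIn {n : ℕ} {w : ℝ → ℝ → ℝ} (hw : ContDiffOn ℝ n (Function.uncurry w) Qdom)
    (hf : ContDiff ℝ n (Function.uncurry f)) (hsupp : suppIn f) :
    ContDiff ℝ n (Function.uncurry fun R β => w R β * f R β) := by
  refine contDiff_iff_contDiffAt.mpr fun p => ?_
  by_cases hp : p ∈ tsupport (Function.uncurry f)
  · exact (hw.contDiffAt (isOpen_Qdom.mem_nhds ((suppIn_iff.mp hsupp).2 hp))).mul hf.contDiffAt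
  · refine (contDiffAt_const (c := (0 : ℝ))).congr_of_eventuallyEq ?_
    filter_upwards [notMem_tsupport_iff_eventuallyEq.mp hp] with q hq
    exact mul_eq_zero_of_right _ hq

lemma enorm_le_lintegral_DR_Dbeta (hf : ContDiff ℝ 2 (Function.uncurry f)) (hsupp : suppIn f)
    (R β : ℝ) :
    ‖f R β‖ₑ ≤ ∫⁻ p in Qdom, ‖(p.1 * sin (2 * p.2))⁻¹ * DR (Dbeta f) p.1 p.2‖ₑ := by
  have hmixed : suppIn fun r b => deriv (fun r => deriv (f r) b) r :=
    suppIn_of_support_subset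
      (suppIn_of_support_subset hsupp (support_deriv_snd_subset f))
      (support_deriv_fst_subset _)
  refine (enorm_le_lintegral_mixed_deriv hf (suppIn_iff.mp hsupp).1 R β).trans_eq ?_
  rw [← setLIntegral_eq_of_support_subset (s := Qdom)]
  · refine setLIntegral_congr_fun measurableSet_Qdom fun p hp => ?_
    have hne : p.1 * sin (2 * p.2) ≠ 0 := (mul_pos hp.1 (sin_two_mul_pos hp.2)).ne'
    simp only [DR_Dbeta_apply, inv_mul_cancel_left₀ hne]
  · refine Function.support_subset_iff'.mpr fun p hp => ?_
    simp only [eq_zero_of_notMem_Qdom hmixed hp, enorm_zero]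

end CompactSupport

/-! ### Weighted square norms -/

section WeightedNorm

variable {f g w : ℝ → ℝ → ℝ}

/-- The weighted norm `‖f w^{1/2}‖₂` from which the Sobolev norms `Hnorm` are assembled. -/
def weightedNorm (w f : ℝ → ℝ → ℝ) : ℝ := norm2 fun R β => f R β * √(w R β)

lemma weightedNorm_nonneg (w f : ℝ → ℝ → ℝ) : 0 ≤ weightedNorm w f := sqrt_nonneg _

lemma norm2_eq_lpNorm (hf : MemLp (Function.uncurry f) 2 (volume.restrict Qdom)) :
    norm2 f = lpNorm (Function.uncurry f) 2 (volume.restrict Qdom) := by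
  have hintegrable : IntegrableOn (fun p : ℝ × ℝ => f p.1 p.2 * f p.1 p.2)
      (Ioi 0 ×ˢ Ioo 0 (π / 2)) := by
    simpa only [sq, Function.uncurry, IntegrableOn, Qdom] using hf.integrable_sq
  rw [lpNorm_eq_integral_norm_rpow_toReal two_ne_zero ENNReal.ofNat_ne_top hf.aestronglyMeasurable,
    norm2, inner2, ← setIntegral_prod _ hintegrable, sqrt_eq_rpow]
  simp [Qdom, sq, Function.uncurry, Measure.volume_eq_prod]

lemma memLp_mul_sqrt (hw : ContinuousOn (Function.uncurry w) Qdom)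
    (hf : Continuous (Function.uncurry f)) (hsupp : suppIn f) :
    MemLp (Function.uncurry fun R β => f R β * √(w R β)) 2 (volume.restrict Qdom) := by
  have hsqrt : ContDiffOn ℝ (0 : ℕ) (Function.uncurry fun R β => √(w R β)) Qdom :=
    contDiffOn_zero.mpr hw.sqrt
  have hcont : Continuous (Function.uncurry fun R β => f R β * √(w R β)) := by
    simpa only [mul_comm] using
      (contDiff_mul_of_suppIn hsqrt (contDiff_zero.mpr hf) hsupp).continuous
  have hcompact : HasCompactSupport (Function.uncurry fun R β => f R β * √(w R β)) := by
    simpa only [mul_comm] using (suppIn_iff.mp (suppIn_mul_left hsupp fun R β => √(w R β))).1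
  exact (hcont.memLp_of_hasCompactSupport hcompact).restrict Qdom

lemma eLpNorm_mul_sqrt (hw : ContinuousOn (Function.uncurry w) Qdom)
    (hf : Continuous (Function.uncurry f)) (hsupp : suppIn f) :
    eLpNorm (Function.uncurry fun R β => f R β * √(w R β)) 2 (volume.restrict Qdom)
      = ENNReal.ofReal (weightedNorm w f) := by
  have hmem := memLp_mul_sqrt hw hf hsupp
  rw [weightedNorm, norm2_eq_lpNorm hmem, ofReal_lpNorm hmem]

lemma weightedNorm_sub_le (hw : ContinuousOn (Function.uncurry w) Qdom)
    (hf : Continuous (Function.uncurry f)) (hfsupp : suppIn f)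
    (hg : Continuous (Function.uncurry g)) (hgsupp : suppIn g) :
    weightedNorm w (fun R β => f R β - g R β) ≤ weightedNorm w f + weightedNorm w g := by
  have hmem_f := memLp_mul_sqrt hw hf hfsupp
  have hmem_g := memLp_mul_sqrt hw hg hgsupp
  have hsub : (Function.uncurry fun R β => (f R β - g R β) * √(w R β))
      = (Function.uncurry fun R β => f R β * √(w R β))
        - Function.uncurry fun R β => g R β * √(w R β) :=
    funext fun p => sub_mul _ _ _
  have hmem : MemLp (Function.uncurry fun R β => (f R β - g R β) * √(w R β)) 2
    (volume.restrict Qdom) := hsub ▸ hmem_f.sub hmem_g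
  simp only [weightedNorm]
  rw [norm2_eq_lpNorm hmem, norm2_eq_lpNorm hmem_f, norm2_eq_lpNorm hmem_g, hsub]
  exact lpNorm_sub_le hmem_f one_le_two

lemma weightedNorm_mul_le {c : ℝ} (hw : ContinuousOn (Function.uncurry w) Qdom)
    (hg : Continuous (Function.uncurry g)) (hc : ∀ R β, |g R β| ≤ c)
    (hf : Continuous (Function.uncurry f)) (hsupp : suppIn f) :
    weightedNorm w (fun R β => g R β * f R β) ≤ c * weightedNorm w f := by
  have hc0 : 0 ≤ c := (abs_nonneg _).trans (hc 0 0)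
  have hgf : Continuous (Function.uncurry fun R β => g R β * f R β) := hg.mul hf
  rw [← ENNReal.ofReal_le_ofReal_iff (mul_nonneg hc0 (weightedNorm_nonneg w f)),
    ENNReal.ofReal_mul hc0, ← eLpNorm_mul_sqrt hw hf hsupp,
    ← eLpNorm_mul_sqrt hw hgf (suppIn_mul_left hsupp g)]
  refine eLpNorm_le_mul_eLpNorm_of_ae_le_mul (.of_forall fun p => ?_) 2
  simp only [Function.uncurry, norm_eq_abs, mul_assoc, abs_mul (g p.1 p.2)]
  gcongr
  exact hc _ _

lemma weightedNorm_le_Hnorm {m i j : ℕ} (hij : i + j + 1 ≤ m) (v w f : ℝ → ℝ → ℝ) :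
    weightedNorm w (DR^[i] (Dbeta^[j + 1] f)) ≤ Hnorm m v w f := by
  refine (Finset.single_le_sum (f := fun p : ℕ × ℕ => weightedNorm w (DR^[p.1] (Dbeta^[p.2 + 1] f)))
    (fun p _ => weightedNorm_nonneg _ _) (a := (i, j)) ?_).trans
    (le_add_of_nonneg_left (Finset.sum_nonneg fun k _ => sqrt_nonneg _))
  simp only [Finset.mem_filter, Finset.mem_product, Finset.mem_range]
  omega

lemma Hnorm_nonneg (m : ℕ) (v w f : ℝ → ℝ → ℝ) : 0 ≤ Hnorm m v w f :=
  add_nonneg (Finset.sum_nonneg fun _ _ => sqrt_nonneg _)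
    (Finset.sum_nonneg fun _ _ => sqrt_nonneg _)

lemma supDom_le {B : ℝ} (hB : 0 ≤ B) (h : ∀ R > 0, ∀ β ∈ Ioo 0 (π / 2), |f R β| ≤ B) :
    supDom f ≤ B :=
  Real.iSup_le (fun R => Real.iSup_le (fun β => h R.1 R.2 β.1 β.2) hB) hB

end WeightedNorm

/-! ### Conjugation by power weights -/

section PowerWeight

variable {u : ℝ → ℝ → ℝ}

/-- The weight `R^{-a} sin(2β)^{-b}`. -/
def powWeight (a b : ℝ) : ℝ → ℝ → ℝ := fun R β => R ^ (-a) * sin (2 * β) ^ (-b)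

/-- `D_R` conjugated by `powWeight a b`. -/
def conjDR (a : ℝ) (u : ℝ → ℝ → ℝ) : ℝ → ℝ → ℝ := fun R β => DR u R β - a * u R β

/-- `D_β` conjugated by `powWeight a b`. -/
def conjDbeta (b : ℝ) (u : ℝ → ℝ → ℝ) : ℝ → ℝ → ℝ :=
  fun R β => Dbeta u R β - 2 * b * cos (2 * β) * u R β

lemma contDiffOn_powWeight (n : ℕ) (a b : ℝ) :
    ContDiffOn ℝ n (Function.uncurry (powWeight a b)) Qdom :=
  (contDiffOn_fst.rpow_const_of_ne fun _ hp => hp.1.ne').mul <|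
    (by fun_prop : ContDiff ℝ n fun p : ℝ × ℝ => sin (2 * p.2)).contDiffOn.rpow_const_of_ne
      fun _ hp => (sin_two_mul_pos hp.2).ne'

lemma powWeight_pos (a b : ℝ) {R β : ℝ} (hR : 0 < R) (hβ : β ∈ Ioo 0 (π / 2)) :
    0 < powWeight a b R β :=
  mul_pos (rpow_pos_of_pos hR _) (rpow_pos_of_pos (sin_two_mul_pos hβ) _)

lemma DR_powWeight_mul {a b R β : ℝ} (hR : 0 < R) (hu : DifferentiableAt ℝ (fun r => u r β) R) :
    DR (fun R β => powWeight a b R β * u R β) R β = powWeight a b R β * conjDR a u R β := by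
  have hderiv : HasDerivAt (fun r => powWeight a b r β * u r β) _ R :=
    ((hasDerivAt_rpow_const (.inl hR.ne')).mul_const (sin (2 * β) ^ (-b))).fun_mul hu.hasDerivAt
  rw [DR, hderiv.deriv]
  simp only [powWeight, conjDR, DR, rpow_sub_one hR.ne']
  field_simp
  ring

lemma Dbeta_powWeight_mul {a b R β : ℝ} (hβ : β ∈ Ioo 0 (π / 2))
    (hu : DifferentiableAt ℝ (u R) β) :
    Dbeta (fun R β => powWeight a b R β * u R β) R β = powWeight a b R β * conjDbeta b u R β := by
  have hsin := sin_two_mul_pos hβ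
  have hinner : HasDerivAt (fun β => sin (2 * β)) (cos (2 * β) * 2) β := by
    simpa using ((hasDerivAt_id β).const_mul 2).sin
  have hderiv : HasDerivAt (fun β => powWeight a b R β * u R β) _ β :=
    ((hinner.rpow_const (.inl hsin.ne')).const_mul (R ^ (-a))).fun_mul hu.hasDerivAt
  rw [Dbeta, hderiv.deriv]
  simp only [powWeight, conjDbeta, Dbeta, rpow_sub_one hsin.ne']
  field_simp
  ring

lemma contDiff_conjDbeta {n : ℕ} (b : ℝ) (hu : ContDiff ℝ (n + 1) (Function.uncurry u)) :
    ContDiff ℝ n (Function.uncurry (conjDbeta b u)) :=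
  (contDiff_Dbeta hu).sub <|
    (by fun_prop : ContDiff ℝ n fun p : ℝ × ℝ => 2 * b * cos (2 * p.2)).mul
      (hu.of_le (by norm_cast; omega))

lemma DR_Dbeta_powWeight_mul {a b R β : ℝ} (hu : ContDiff ℝ 2 (Function.uncurry u))
    (hR : 0 < R) (hβ : β ∈ Ioo 0 (π / 2)) :
    DR (Dbeta fun R β => powWeight a b R β * u R β) R β
      = powWeight a b R β * conjDR a (conjDbeta b u) R β := by
  have hdiff : Differentiable ℝ (Function.uncurry u) := hu.differentiable (by simp)
  have hdiff' : Differentiable ℝ (Function.uncurry (conjDbeta b u)) :=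
    (contDiff_conjDbeta (n := 1) b hu).differentiable (by simp)
  have hDbeta : (fun r => Dbeta (fun R β => powWeight a b R β * u R β) r β)
      = fun r => powWeight a b r β * conjDbeta b u r β :=
    funext fun r => Dbeta_powWeight_mul hβ (differentiableAt_snd_slice hdiff r β)
  rw [← DR_powWeight_mul hR (differentiableAt_fst_slice hdiff' R β), DR, hDbeta, DR]

lemma conjDR_conjDbeta (hu : ContDiff ℝ 2 (Function.uncurry u)) (a b : ℝ) :
    conjDR a (conjDbeta b u)
      = fun R β => conjDR a (Dbeta u) R β - 2 * b * cos (2 * β) * conjDR a u R β := by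
  have hdiff : Differentiable ℝ (Function.uncurry u) := hu.differentiable (by simp)
  have hdiff' : Differentiable ℝ (Function.uncurry (Dbeta u)) :=
    (contDiff_Dbeta (n := 1) hu).differentiable (by simp)
  ext R β
  simp only [conjDR, DR, conjDbeta]
  rw [deriv_fun_sub (differentiableAt_fst_slice hdiff' R β)
    ((differentiableAt_fst_slice hdiff R β).const_mul _), deriv_const_mul_field]
  ring

lemma suppIn_conjDR (a : ℝ) (hu : suppIn u) : suppIn (conjDR a u) :=
  suppIn_sub (suppIn_DR hu) (suppIn_mul_left hu fun _ _ => a)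

lemma suppIn_conjDbeta (b : ℝ) (hu : suppIn u) : suppIn (conjDbeta b u) :=
  suppIn_sub (suppIn_Dbeta hu) (suppIn_mul_left hu fun _ β => 2 * b * cos (2 * β))

lemma continuous_conjDR (a : ℝ) (hu : ContDiff ℝ 1 (Function.uncurry u)) :
    Continuous (Function.uncurry (conjDR a u)) :=
  (contDiff_DR (n := 0) (by simpa using hu)).continuous.sub (continuous_const.mul hu.continuous)

lemma weightedNorm_conjDR_le {a : ℝ} {w : ℝ → ℝ → ℝ} (ha : 0 ≤ a)
    (hw : ContinuousOn (Function.uncurry w) Qdom) (hu : ContDiff ℝ 1 (Function.uncurry u))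
    (hsupp : suppIn u) :
    weightedNorm w (conjDR a u) ≤ weightedNorm w (DR u) + a * weightedNorm w u := by
  have hau : Continuous (Function.uncurry fun R β => a * u R β) :=
    continuous_const.mul hu.continuous
  calc weightedNorm w (conjDR a u)
      ≤ weightedNorm w (DR u) + weightedNorm w (fun R β => a * u R β) :=
        weightedNorm_sub_le hw (contDiff_DR (n := 0) (by simpa using hu)).continuous
          (suppIn_DR hsupp) hau (suppIn_mul_left hsupp fun _ _ => a)
    _ ≤ weightedNorm w (DR u) + a * weightedNorm w u := by
        gcongr
        exact weightedNorm_mul_le hw continuous_const (fun _ _ => (abs_of_nonneg ha).le)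
          hu.continuous hsupp

lemma weightedNorm_conjDR_conjDbeta_le {a b : ℝ} {w : ℝ → ℝ → ℝ} (ha : 0 ≤ a) (hb : 0 ≤ b)
    (hw : ContinuousOn (Function.uncurry w) Qdom) (hu : ContDiff ℝ 2 (Function.uncurry u))
    (hsupp : suppIn u) :
    weightedNorm w (conjDR a (conjDbeta b u))
      ≤ weightedNorm w (DR (Dbeta u)) + a * weightedNorm w (Dbeta u)
        + 2 * b * (weightedNorm w (DR u) + a * weightedNorm w u) := by
  have hu' : ContDiff ℝ 1 (Function.uncurry u) := hu.of_le one_le_two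
  have hDbeta : ContDiff ℝ 1 (Function.uncurry (Dbeta u)) := contDiff_Dbeta (n := 1) hu
  have hcos : Continuous (Function.uncurry fun _ β : ℝ => 2 * b * cos (2 * β)) := by
    unfold Function.uncurry; fun_prop
  have hcos_le (_R β : ℝ) : |2 * b * cos (2 * β)| ≤ 2 * b := by
    rw [abs_mul, abs_of_nonneg (by positivity)]
    exact mul_le_of_le_one_right (by positivity) (abs_cos_le_one _)
  calc weightedNorm w (conjDR a (conjDbeta b u))
      ≤ weightedNorm w (conjDR a (Dbeta u))
        + weightedNorm w (fun R β => 2 * b * cos (2 * β) * conjDR a u R β) := by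
        rw [conjDR_conjDbeta hu]
        exact weightedNorm_sub_le hw (continuous_conjDR a hDbeta)
          (suppIn_conjDR a (suppIn_Dbeta hsupp)) (hcos.mul (continuous_conjDR a hu'))
          (suppIn_mul_left (suppIn_conjDR a hsupp) _)
    _ ≤ _ := by
        refine add_le_add (weightedNorm_conjDR_le ha hw hDbeta (suppIn_Dbeta hsupp)) ?_
        refine (weightedNorm_mul_le hw hcos hcos_le (continuous_conjDR a hu')
          (suppIn_conjDR a hsupp)).trans ?_
        gcongr
        exact weightedNorm_conjDR_le ha hw hu' hsupp

end PowerWeight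

/-! ### The dual weight -/

section DualWeight

variable {α a b δ R β : ℝ}

lemma phi2_pos (hR : 0 < R) (hβ : β ∈ Ioo 0 (π / 2)) : 0 < phi2 α R β := by
  have hsin := sin_two_mul_pos hβ
  unfold phi2
  positivity

lemma continuousOn_phi2 (α : ℝ) : ContinuousOn (Function.uncurry (phi2 α)) Qdom := by
  unfold phi2 Function.uncurry
  refine .mul (.div (by fun_prop) (by fun_prop) fun p hp => (pow_pos hp.1 4).ne') ?_
  exact .rpow_const (by fun_prop) fun p hp => .inl (sin_two_mul_pos hp.2).ne'

/-- The weight paired with `φ₂^{1/2}` when Cauchy–Schwarz is applied to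
`∂_R ∂_β (powWeight a b · u) = dualWeight α a b · (conjDR a (conjDbeta b u) · φ₂^{1/2})`. -/
def dualWeight (α a b : ℝ) : ℝ → ℝ → ℝ :=
  fun R β => powWeight a b R β / (R * sin (2 * β) * √(phi2 α R β))

lemma measurable_dualWeight (α a b : ℝ) : Measurable (Function.uncurry (dualWeight α a b)) := by
  unfold dualWeight powWeight phi2 Function.uncurry
  fun_prop

lemma dualWeight_sq (hR : 0 < R) (hβ : β ∈ Ioo 0 (π / 2)) :
    dualWeight α a b R β ^ 2
      = R ^ (2 - 2 * a) / (1 + R) ^ 4 * sin (2 * β) ^ (α / 10 - 1 - 2 * b) := by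
  have hsin := sin_two_mul_pos hβ
  have hphi : √(phi2 α R β) ^ 2 = (1 + R) ^ 4 / R ^ 4 / (sin (2 * β) * sin (2 * β) ^ (α / 10)) := by
    rw [sq_sqrt (phi2_pos hR hβ).le, phi2, rpow_neg hsin.le, rpow_add hsin, rpow_one,
      ← div_eq_mul_inv]
  have hradial : R ^ (2 - 2 * a) = R ^ 2 * (R ^ (-a)) ^ 2 := by
    rw [← rpow_mul_natCast hR.le, ← rpow_natCast, ← rpow_add hR]
    push_cast
    ring_nf
  have hangular : sin (2 * β) ^ (α / 10 - 1 - 2 * b)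
      = sin (2 * β) ^ (α / 10) * (sin (2 * β) ^ (-b)) ^ 2 / sin (2 * β) := by
    rw [← rpow_mul_natCast hsin.le, ← rpow_add hsin, ← rpow_sub_one hsin.ne']
    push_cast
    ring_nf
  rw [dualWeight, powWeight, div_pow, mul_pow (R * _), hphi, hradial, hangular]
  have : 0 < sin (2 * β) ^ (α / 10) := by positivity
  field_simp

lemma dualWeight_sq_le (ha : 0 ≤ a) (ha1 : a ≤ 1) (hδ : δ + 2 * b ≤ α / 10) (hR : 0 < R)
    (hβ : β ∈ Ioo 0 (π / 2)) :
    dualWeight α a b R β ^ 2 ≤ ((R + 1) ^ 2)⁻¹ * sin (2 * β) ^ (δ - 1) := by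
  have hsin := sin_two_mul_pos hβ
  have hradial : R ^ (2 - 2 * a) / (1 + R) ^ 4 ≤ ((R + 1) ^ 2)⁻¹ := by
    calc R ^ (2 - 2 * a) / (1 + R) ^ 4 ≤ (1 + R) ^ (2 : ℝ) / (1 + R) ^ 4 := by
          gcongr
          exact (rpow_le_rpow hR.le (by linarith) (by linarith)).trans
            (rpow_le_rpow_of_exponent_le (by linarith) (by linarith))
      _ = ((R + 1) ^ 2)⁻¹ := by
          rw [rpow_two, add_comm]
          field_simp
  rw [dualWeight_sq hR hβ]
  exact mul_le_mul hradial (rpow_le_rpow_of_exponent_ge hsin (sin_le_one _) (by linarith))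
    (by positivity) (by positivity)

lemma lintegral_Ioi_inv_add_one_sq :
    ∫⁻ R in Ioi (0 : ℝ), ENNReal.ofReal ((R + 1) ^ 2)⁻¹ = 1 := by
  have hderiv (R : ℝ) (hR : R ∈ Ici 0) :
      HasDerivAt (fun R => -(R + 1)⁻¹) ((R + 1) ^ 2)⁻¹ R := by
    have hne : R + 1 ≠ 0 := (add_pos_of_nonneg_of_pos hR one_pos).ne'
    simpa [neg_div] using (((hasDerivAt_id' R).add_const 1).fun_inv hne).fun_neg
  have hlim : Filter.Tendsto (fun R : ℝ => -(R + 1)⁻¹) Filter.atTop (𝓝 0) := by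
    simpa using (tendsto_inv_atTop_zero.comp
      (Filter.tendsto_atTop_add_const_right _ (1 : ℝ) Filter.tendsto_id)).neg
  have hnonneg (R : ℝ) (_ : R ∈ Ioi 0) : 0 ≤ ((R + 1) ^ 2)⁻¹ := by positivity
  rw [← ofReal_integral_eq_lintegral_ofReal
      (integrableOn_Ioi_deriv_of_nonneg' hderiv hnonneg hlim)
      ((ae_restrict_iff' measurableSet_Ioi).mpr (.of_forall hnonneg)),
    integral_Ioi_of_hasDerivAt_of_nonneg' hderiv hnonneg hlim]
  norm_num

lemma sin_two_mul_rpow_le (hδ : δ ≤ 1) (hβ : β ∈ Ioo 0 (π / 2)) :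
    sin (2 * β) ^ (δ - 1) ≤ β ^ (δ - 1) + (π / 2 - β) ^ (δ - 1) := by
  have hβ' : 0 < π / 2 - β := sub_pos.mpr hβ.2
  have le_sin {x : ℝ} (hx : 0 < x) (hx4 : x ≤ π / 4) : x ≤ sin (2 * x) :=
    calc x ≤ 2 / π * (2 * x) := by
          rw [← mul_assoc]
          refine le_mul_of_one_le_left hx.le ?_
          rw [div_mul_eq_mul_div, one_le_div pi_pos]
          linarith [pi_le_four]
      _ ≤ sin (2 * x) := mul_le_sin (by linarith) (by linarith)
  rcases le_total β (π / 4) with hle | hge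
  · exact (rpow_le_rpow_of_nonpos hβ.1 (le_sin hβ.1 hle) (by linarith)).trans
      (le_add_of_nonneg_right (rpow_nonneg hβ'.le _))
  · have hsin : sin (2 * β) = sin (2 * (π / 2 - β)) := by
      rw [mul_sub, mul_div_cancel₀ _ two_ne_zero, sin_pi_sub]
    rw [hsin]
    exact (rpow_le_rpow_of_nonpos hβ' (le_sin hβ' (by linarith)) (by linarith)).trans
      (le_add_of_nonneg_left (rpow_nonneg hβ.1.le _))

lemma lintegral_sin_two_mul_rpow_le (hδ : 0 < δ) (hδ1 : δ ≤ 1) :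
    ∫⁻ β in Ioo 0 (π / 2), ENNReal.ofReal (sin (2 * β) ^ (δ - 1)) ≤ ENNReal.ofReal (4 / δ) := by
  have hpi : 0 ≤ π / 2 := by positivity
  have hleft : IntervalIntegrable (fun β : ℝ => β ^ (δ - 1)) volume 0 (π / 2) :=
    intervalIntegral.intervalIntegrable_rpow' (by linarith)
  have hright : IntervalIntegrable (fun β : ℝ => (π / 2 - β) ^ (δ - 1)) volume 0 (π / 2) := by
    simpa using (hleft.comp_sub_left (π / 2)).symm
  have hintegrable := (intervalIntegrable_iff_integrableOn_Ioo_of_le hpi).mp (hleft.add hright)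
  have hvalue : ∫ β in (0 : ℝ)..π / 2, (β ^ (δ - 1) + (π / 2 - β) ^ (δ - 1)) ≤ 4 / δ := by
    have hpow : (π / 2) ^ δ ≤ 2 :=
      calc (π / 2) ^ δ ≤ 2 ^ δ := rpow_le_rpow hpi (by linarith [pi_le_four]) hδ.le
        _ ≤ 2 := rpow_le_self_of_one_le one_le_two hδ1
    rw [intervalIntegral.integral_add hleft hright,
      intervalIntegral.integral_comp_sub_left (fun β : ℝ => β ^ (δ - 1)), sub_self, sub_zero,
      integral_rpow (.inl (by linarith)), sub_add_cancel, zero_rpow hδ.ne', sub_zero, ← add_div]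
    gcongr
    linarith
  have hnonneg (β : ℝ) (hβ : β ∈ Ioo 0 (π / 2)) : 0 ≤ β ^ (δ - 1) + (π / 2 - β) ^ (δ - 1) :=
    add_nonneg (rpow_nonneg hβ.1.le _) (rpow_nonneg (sub_pos.mpr hβ.2).le _)
  calc ∫⁻ β in Ioo 0 (π / 2), ENNReal.ofReal (sin (2 * β) ^ (δ - 1))
      ≤ ∫⁻ β in Ioo 0 (π / 2), ENNReal.ofReal (β ^ (δ - 1) + (π / 2 - β) ^ (δ - 1)) :=
        setLIntegral_mono' measurableSet_Ioo fun β hβ =>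
          ENNReal.ofReal_le_ofReal (sin_two_mul_rpow_le hδ1 hβ)
    _ = ENNReal.ofReal (∫ β in (0 : ℝ)..π / 2, (β ^ (δ - 1) + (π / 2 - β) ^ (δ - 1))) := by
        rw [intervalIntegral.integral_of_le hpi, integral_Ioc_eq_integral_Ioo,
          ofReal_integral_eq_lintegral_ofReal hintegrable
            ((ae_restrict_iff' measurableSet_Ioo).mpr (.of_forall hnonneg))]
    _ ≤ ENNReal.ofReal (4 / δ) := ENNReal.ofReal_le_ofReal hvalue

lemma eLpNorm_dualWeight_le (ha : 0 ≤ a) (ha1 : a ≤ 1) (hδ : 0 < δ) (hδ1 : δ ≤ 1)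
    (hδb : δ + 2 * b ≤ α / 10) :
    eLpNorm (Function.uncurry (dualWeight α a b)) 2 (volume.restrict Qdom)
      ≤ ENNReal.ofReal (2 / √δ) := by
  have hsq (p : ℝ × ℝ) : ‖Function.uncurry (dualWeight α a b) p‖ₑ ^ 2
      = ENNReal.ofReal (dualWeight α a b p.1 p.2 ^ 2) := by
    rw [← sq_abs, ENNReal.ofReal_pow (abs_nonneg _), ← enorm_eq_ofReal_abs, Function.uncurry]
  rw [← ENNReal.pow_le_pow_left_iff two_ne_zero, ← ENNReal.ofReal_pow (by positivity), div_pow,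
    sq_sqrt hδ.le]
  calc eLpNorm (Function.uncurry (dualWeight α a b)) 2 (volume.restrict Qdom) ^ 2
      = ∫⁻ p in Qdom, ENNReal.ofReal (dualWeight α a b p.1 p.2 ^ 2) := by
        simpa [hsq] using eLpNorm_nnreal_pow_eq_lintegral (p := 2) (μ := volume.restrict Qdom)
          (f := Function.uncurry (dualWeight α a b)) two_ne_zero
    _ ≤ ∫⁻ p in Qdom, ENNReal.ofReal ((p.1 + 1) ^ 2)⁻¹ *
          ENNReal.ofReal (sin (2 * p.2) ^ (δ - 1)) :=
        setLIntegral_mono' measurableSet_Qdom fun p hp => by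
          rw [← ENNReal.ofReal_mul (by positivity)]
          exact ENNReal.ofReal_le_ofReal (dualWeight_sq_le ha ha1 hδb hp.1 hp.2)
    _ = ∫⁻ β in Ioo 0 (π / 2), ENNReal.ofReal (sin (2 * β) ^ (δ - 1)) := by
        rw [Qdom, Measure.volume_eq_prod, ← Measure.prod_restrict, lintegral_prod_mul
          (f := fun R : ℝ => ENNReal.ofReal ((R + 1) ^ 2)⁻¹)
          (g := fun β : ℝ => ENNReal.ofReal (sin (2 * β) ^ (δ - 1))) (by fun_prop) (by fun_prop),
          lintegral_Ioi_inv_add_one_sq, one_mul]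
    _ ≤ ENNReal.ofReal (2 ^ 2 / δ) := by
        norm_num1
        exact lintegral_sin_two_mul_rpow_le hδ hδ1

end DualWeight

/-! ### Pointwise bounds -/

section Embedding

variable {u f : ℝ → ℝ → ℝ} {α a b δ : ℝ}

lemma lintegral_dualWeight_mul_le (hu : Continuous (Function.uncurry u)) (hsupp : suppIn u)
    (ha : 0 ≤ a) (ha1 : a ≤ 1) (hδ : 0 < δ) (hδ1 : δ ≤ 1) (hδb : δ + 2 * b ≤ α / 10) :
    ∫⁻ p in Qdom, ‖dualWeight α a b p.1 p.2 * (u p.1 p.2 * √(phi2 α p.1 p.2))‖ₑ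
      ≤ ENNReal.ofReal (2 / √δ * weightedNorm (phi2 α) u) := by
  have hholder := eLpNorm_smul_le_mul_eLpNorm (p := 2) (q := 2) (r := 1)
    (memLp_mul_sqrt (continuousOn_phi2 α) hu hsupp).aestronglyMeasurable
    (measurable_dualWeight α a b).aestronglyMeasurable
  rw [eLpNorm_one_eq_lintegral_enorm, eLpNorm_mul_sqrt (continuousOn_phi2 α) hu hsupp] at hholder
  rw [ENNReal.ofReal_mul (by positivity)]
  refine hholder.trans ?_
  gcongr
  exact eLpNorm_dualWeight_le ha ha1 hδ hδ1 hδb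

theorem powWeight_mul_abs_le (hu : ContDiff ℝ 2 (Function.uncurry u)) (hsupp : suppIn u)
    (ha : 0 ≤ a) (ha1 : a ≤ 1) (hδ : 0 < δ) (hδ1 : δ ≤ 1) (hδb : δ + 2 * b ≤ α / 10) {R β : ℝ}
    (hR : 0 < R) (hβ : β ∈ Ioo 0 (π / 2)) :
    powWeight a b R β * |u R β|
      ≤ 2 / √δ * weightedNorm (phi2 α) (conjDR a (conjDbeta b u)) := by
  have hwu : ContDiff ℝ 2 (Function.uncurry fun R β => powWeight a b R β * u R β) :=
    contDiff_mul_of_suppIn (contDiffOn_powWeight 2 a b) hu hsupp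
  rw [← ENNReal.ofReal_le_ofReal_iff (mul_nonneg (by positivity) (weightedNorm_nonneg _ _)),
    ← abs_of_pos (powWeight_pos a b hR hβ), ← abs_mul, ← enorm_eq_ofReal_abs]
  calc ‖powWeight a b R β * u R β‖ₑ
      ≤ ∫⁻ p in Qdom, ‖(p.1 * sin (2 * p.2))⁻¹ *
          DR (Dbeta fun R β => powWeight a b R β * u R β) p.1 p.2‖ₑ :=
        enorm_le_lintegral_DR_Dbeta hwu (suppIn_mul_left hsupp _) R β
    _ = ∫⁻ p in Qdom, ‖dualWeight α a b p.1 p.2 *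
          (conjDR a (conjDbeta b u) p.1 p.2 * √(phi2 α p.1 p.2))‖ₑ :=
        setLIntegral_congr_fun measurableSet_Qdom fun p hp => by
          have hphi : √(phi2 α p.1 p.2) ≠ 0 := (sqrt_pos.mpr (phi2_pos hp.1 hp.2)).ne'
          simp only [DR_Dbeta_powWeight_mul hu hp.1 hp.2, dualWeight]
          congr 1
          field_simp
    _ ≤ ENNReal.ofReal (2 / √δ * weightedNorm (phi2 α) (conjDR a (conjDbeta b u))) :=
        lintegral_dualWeight_mul_le (continuous_conjDR a (contDiff_conjDbeta (n := 1) b hu))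
          (suppIn_conjDR a (suppIn_conjDbeta b hsupp)) ha ha1 hδ hδ1 hδb

theorem powWeight_mul_abs_le_weightedNorm_derivs (hu : ContDiff ℝ 2 (Function.uncurry u))
    (hsupp : suppIn u) (ha : 0 ≤ a) (ha1 : a ≤ 1) (hb : 0 ≤ b) (hδ : 0 < δ) (hδ1 : δ ≤ 1)
    (hδb : δ + 2 * b ≤ α / 10) {R β : ℝ} (hR : 0 < R) (hβ : β ∈ Ioo 0 (π / 2)) :
    powWeight a b R β * |u R β| ≤ 2 / √δ *
      (weightedNorm (phi2 α) (DR (Dbeta u)) + a * weightedNorm (phi2 α) (Dbeta u)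
        + 2 * b * (weightedNorm (phi2 α) (DR u) + a * weightedNorm (phi2 α) u)) :=
  (powWeight_mul_abs_le hu hsupp ha ha1 hδ hδ1 hδb hR hβ).trans <|
    mul_le_mul_of_nonneg_left
      (weightedNorm_conjDR_conjDbeta_le ha hb (continuousOn_phi2 α) hu hsupp) (by positivity)

theorem supDom_le_Hnorm {m : ℕ} (hf : ContDiff ℝ 2 (Function.uncurry f)) (hsupp : suppIn f)
    (hm : 2 ≤ m) (w : ℝ → ℝ → ℝ) (hδ : 0 < δ) (hδ1 : δ ≤ 1) (hδα : δ ≤ α / 10) :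
    supDom f ≤ 2 / √δ * Hnorm m w (phi2 α) f := by
  have hH := Hnorm_nonneg m w (phi2 α) f
  refine supDom_le (by positivity) fun R hR β hβ => ?_
  have hpoint := powWeight_mul_abs_le_weightedNorm_derivs (α := α) (a := 0) (b := 0) hf
    hsupp le_rfl zero_le_one le_rfl hδ hδ1 (by linarith) hR hβ
  simp only [powWeight, neg_zero, rpow_zero, mul_zero, zero_mul, add_zero, one_mul] at hpoint
  refine hpoint.trans ?_
  gcongr
  exact weightedNorm_le_Hnorm (i := 1) (j := 0) hm w (phi2 α) f

theorem supDom_DR_le_Hnorm (hf : ContDiff ℝ 3 (Function.uncurry f)) (hsupp : suppIn f)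
    (w : ℝ → ℝ → ℝ) (hδ : 0 < δ) (hδ1 : δ ≤ 1) (hδα : δ ≤ α / 10) :
    supDom (fun R β => (1 + R) / R * DR f R β) ≤ 2 / √δ * (3 * Hnorm 3 w (phi2 α) f) := by
  have hH := Hnorm_nonneg 3 w (phi2 α) f
  have hRRβ : weightedNorm (phi2 α) (DR (DR (Dbeta f))) ≤ Hnorm 3 w (phi2 α) f :=
    weightedNorm_le_Hnorm (i := 2) (j := 0) le_rfl w (phi2 α) f
  have hRβ : weightedNorm (phi2 α) (DR (Dbeta f)) ≤ Hnorm 3 w (phi2 α) f :=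
    weightedNorm_le_Hnorm (i := 1) (j := 0) (by norm_num) w (phi2 α) f
  refine supDom_le (by positivity) fun R hR β hβ => ?_
  have hpoint {a : ℝ} (ha : 0 ≤ a) (ha1 : a ≤ 1) :=
    powWeight_mul_abs_le_weightedNorm_derivs (α := α) (a := a) (b := 0)
      (contDiff_DR (n := 2) hf) (suppIn_DR hsupp) ha ha1 le_rfl hδ hδ1 (by linarith) hR hβ
  have hzero := hpoint le_rfl zero_le_one
  have hone := hpoint zero_le_one le_rfl
  rw [Dbeta_DR_comm (hf.of_le (by norm_num))] at hzero hone
  simp only [powWeight, neg_zero, rpow_zero, rpow_neg_one, mul_zero, zero_mul, add_zero, mul_one,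
    one_mul] at hzero hone
  calc |(1 + R) / R * DR f R β| = |DR f R β| + R⁻¹ * |DR f R β| := by
        rw [abs_mul, abs_of_pos (by positivity)]
        field_simp
        ring
    _ ≤ 2 / √δ * weightedNorm (phi2 α) (DR (DR (Dbeta f))) +
          2 / √δ * (weightedNorm (phi2 α) (DR (DR (Dbeta f)))
            + weightedNorm (phi2 α) (DR (Dbeta f))) := add_le_add hzero hone
    _ ≤ 2 / √δ * (3 * Hnorm 3 w (phi2 α) f) := by
        rw [← mul_add]
        gcongr
        linarith

theorem supDom_Dbeta_le_Hnorm (hf : ContDiff ℝ 3 (Function.uncurry f)) (hsupp : suppIn f)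
    (w : ℝ → ℝ → ℝ) (hδ : 0 < δ) (hδ1 : δ ≤ 1) (hδα : δ ≤ α / 20) :
    supDom (fun R β => (1 + (R * sin (2 * β) ^ α) ^ (-(1 / 40 : ℝ))) * Dbeta f R β)
      ≤ 2 / √δ * ((3 + α) * Hnorm 3 w (phi2 α) f) := by
  have hα : 0 ≤ α := by linarith
  have hH := Hnorm_nonneg 3 w (phi2 α) f
  have hnorm {i j : ℕ} (hij : i + j + 1 ≤ 3) := weightedNorm_le_Hnorm hij w (phi2 α) f
  have hRββ : weightedNorm (phi2 α) (DR (Dbeta (Dbeta f))) ≤ Hnorm 3 w (phi2 α) f :=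
    hnorm (i := 1) (j := 1) le_rfl
  have hββ : weightedNorm (phi2 α) (Dbeta (Dbeta f)) ≤ Hnorm 3 w (phi2 α) f :=
    hnorm (i := 0) (j := 1) (by norm_num)
  have hRβ : weightedNorm (phi2 α) (DR (Dbeta f)) ≤ Hnorm 3 w (phi2 α) f :=
    hnorm (i := 1) (j := 0) (by norm_num)
  have hDβ : weightedNorm (phi2 α) (Dbeta f) ≤ Hnorm 3 w (phi2 α) f :=
    hnorm (i := 0) (j := 0) (by norm_num)
  refine supDom_le (by positivity) fun R hR β hβ => ?_
  have hsin := sin_two_mul_pos hβ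
  have hpoint {a b : ℝ} (ha : 0 ≤ a) (ha1 : a ≤ 1) (hb : 0 ≤ b) (hδb : δ + 2 * b ≤ α / 10) :=
    powWeight_mul_abs_le_weightedNorm_derivs (contDiff_Dbeta (n := 2) hf) (suppIn_Dbeta hsupp)
      ha ha1 hb hδ hδ1 hδb hR hβ
  have hzero := hpoint le_rfl zero_le_one le_rfl (by linarith)
  have hsing := hpoint (a := 1 / 40) (b := α / 40) (by norm_num) (by norm_num) (by positivity)
    (by linarith)
  simp only [powWeight, neg_zero, rpow_zero, mul_zero, zero_mul, add_zero, one_mul] at hzero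
  calc |(1 + (R * sin (2 * β) ^ α) ^ (-(1 / 40 : ℝ))) * Dbeta f R β|
      = |Dbeta f R β| + powWeight (1 / 40) (α / 40) R β * |Dbeta f R β| := by
        rw [abs_mul, abs_of_pos (by positivity), mul_rpow hR.le (by positivity),
          ← rpow_mul hsin.le, show α * -(1 / 40 : ℝ) = -(α / 40) by ring, powWeight, add_mul,
          one_mul]
    _ ≤ 2 / √δ * (Hnorm 3 w (phi2 α) f + (Hnorm 3 w (phi2 α) f + 1 / 40 * Hnorm 3 w (phi2 α) f
          + 2 * (α / 40) * (Hnorm 3 w (phi2 α) f + 1 / 40 * Hnorm 3 w (phi2 α) f))) := by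
        rw [mul_add]
        refine add_le_add (hzero.trans ?_) (hsing.trans ?_) <;> gcongr
    _ ≤ 2 / √δ * ((3 + α) * Hnorm 3 w (phi2 α) f) := by
        gcongr
        nlinarith [mul_nonneg hα hH]

end Embedding

theorem Linfty_and_C1_embeddings_general (α₀ : ℝ) :
    ∃ C : ℝ, ∀ α : ℝ, 0 < α → α ≤ α₀ → ∀ w f : ℝ → ℝ → ℝ, suppIn f →
      (ContDiff ℝ 2 (Function.uncurry f) →
        supDom f ≤ C * α ^ (-(1 / 2 : ℝ)) * Hnorm 2 w (phi2 α) f) ∧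
      (ContDiff ℝ 3 (Function.uncurry f) →
        C1norm α f ≤ C * α ^ (-(1 / 2 : ℝ)) * Hnorm 3 w (phi2 α) f) := by
  refine ⟨2 * √(20 + α₀) * (7 + α₀), fun α hα hα₀ w f hsupp => ?_⟩
  have hα₀pos : 0 < α₀ := hα.trans_le hα₀
  set δ := α / (20 + α₀) with hδ_def
  have hδ : 0 < δ := by positivity
  have hδ1 : δ ≤ 1 := (div_le_one (by positivity)).mpr (by linarith)
  have hδα : δ ≤ α / 20 := by rw [hδ_def]; gcongr; linarith
  have hδα' : δ ≤ α / 10 := hδα.trans (by linarith)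
  have hconst : 2 * √(20 + α₀) * (7 + α₀) * α ^ (-(1 / 2 : ℝ)) = 2 / √δ * (7 + α₀) := by
    rw [rpow_neg hα.le, ← sqrt_eq_rpow, hδ_def, sqrt_div' _ (by positivity)]
    field_simp
  have hH (m : ℕ) := Hnorm_nonneg m w (phi2 α) f
  rw [hconst, mul_assoc, mul_assoc]
  refine ⟨fun hf => (supDom_le_Hnorm hf hsupp le_rfl w hδ hδ1 hδα').trans ?_, fun hf => ?_⟩
  · gcongr
    exact le_mul_of_one_le_left (hH 2) (by linarith)
  calc C1norm α f
      ≤ 2 / √δ * Hnorm 3 w (phi2 α) f + 2 / √δ * (3 * Hnorm 3 w (phi2 α) f)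
        + 2 / √δ * ((3 + α) * Hnorm 3 w (phi2 α) f) :=
        add_le_add_three
          (supDom_le_Hnorm (hf.of_le (by norm_num)) hsupp (by norm_num) w hδ hδ1 hδα')
          (supDom_DR_le_Hnorm hf hsupp w hδ hδ1 hδα')
          (supDom_Dbeta_le_Hnorm hf hsupp w hδ hδ1 hδα)
    _ = 2 / √δ * ((7 + α) * Hnorm 3 w (phi2 α) f) := by ring
    _ ≤ 2 / √δ * ((7 + α₀) * Hnorm 3 w (phi2 α) f) := by
        have := hH 3
        gcongr

/-- embeddings `‖f‖_∞ ≲ α^{-1/2}‖f‖_{H²}` and `‖f‖_{C¹} ≲ α^{-1/2}‖f‖_{H³}`. -/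
theorem Linfty_and_C1_embeddings :
    ∃ C : ℝ, ∀ α : ℝ, 0 < α → α ≤ 1/1000 →
      ∀ f : ℝ → ℝ → ℝ, ContDiff ℝ 3 (Function.uncurry f) → suppIn f →
        supDom f ≤ C * α ^ (-(1/2 : ℝ)) * Hnorm 2 phi1 (phi2 α) f ∧
        C1norm α f ≤ C * α ^ (-(1/2 : ℝ)) * Hnorm 3 phi1 (phi2 α) f := by
  obtain ⟨C, hC⟩ := Linfty_and_C1_embeddings_general (1 / 1000)
  exact ⟨C, fun α hα hα₀ f hf hsupp =>
    ⟨(hC α hα hα₀ phi1 f hsupp).1 (hf.of_le (by norm_num)), (hC α hα hα₀ phi1 f hsupp).2 hf⟩⟩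

end Paper
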